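/- arXiv:1807.05549 — 7 statements merged into one kernel-verified Lean document; each statement's English description precedes it below -/
import Mathlib

section
/- For every integer n ≥ 1, the 2^n real numbers d_S, where S ranges over all subsets of {1,…,n}, are linearly independent over ℚ, and their ℚ-linear span coincides with the ℚ-linear span of the powers 1, θ, θ², …, θ^{2^n−1}, where θ = 2·cos(π/2^{n+1}). (Equivalently, the d_S form a ℚ-basis of the field ℚ(2·cos(π/2^{n+1})).) -/
open Real

/-- `c j = 2·cos(π/2^(j+1))` (so `c 0 = 0`). -/
noncomputable def c (j : ℕ) : ℝ := 2 * Real.cos (π / 2 ^ (j + 1))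

/-- `d S = ∏_{j ∈ S} c j` (so `d ∅ = 1`). -/
noncomputable def d (S : Finset ℕ) : ℝ := ∏ j ∈ S, c j

lemma c_zero : c 0 = 0 := by simp [c]

lemma c_succ_sq (k : ℕ) : c (k + 1) ^ 2 = 2 + c k := by
  have h : π / 2 ^ (k + 1) = 2 * (π / 2 ^ (k + 1 + 1)) := by
    rw [pow_succ _ (k + 1)]
    field_simp
  rw [c, c, h, Real.cos_two_mul]
  ring

/-- The `n`-fold iterate of `X ^ 2 - 2`, a monic integer polynomial with root `c n`. -/
noncomputable def iterSqSubTwo : ℕ → Polynomial ℤ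
  | 0 => Polynomial.X
  | n + 1 => iterSqSubTwo n ^ 2 - Polynomial.C 2

lemma aeval_iterSqSubTwo (n k : ℕ) : Polynomial.aeval (c (n + k)) (iterSqSubTwo n) = c k := by
  induction n generalizing k with
  | zero => simp [iterSqSubTwo]
  | succ n ih =>
    have h := ih (k + 1)
    rw [show n + (k + 1) = n + 1 + k by ring] at h
    rw [iterSqSubTwo, map_sub, map_pow, h, c_succ_sq, Polynomial.aeval_C]
    simp

lemma iterSqSubTwo_monic_natDegree (n : ℕ) :
    (iterSqSubTwo n).Monic ∧ (iterSqSubTwo n).natDegree = 2 ^ n := by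
  induction n with
  | zero => exact ⟨Polynomial.monic_X, by simp [iterSqSubTwo]⟩
  | succ n ih =>
    obtain ⟨hm, hd⟩ := ih
    have hd' : (iterSqSubTwo n ^ 2).natDegree = 2 ^ (n + 1) := by
      rw [hm.natDegree_pow, hd, pow_succ, mul_comm]
    refine ⟨(hm.pow 2).sub_of_left ?_, by rw [iterSqSubTwo, Polynomial.natDegree_sub_C, hd']⟩
    refine Polynomial.degree_C_le.trans_lt (Polynomial.natDegree_pos_iff_degree_pos.mp ?_)
    rw [hd']
    positivity

lemma map_iterSqSubTwo_zmod_two (n : ℕ) :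
    (iterSqSubTwo n).map (Int.castRingHom (ZMod 2)) = Polynomial.X ^ 2 ^ n := by
  induction n with
  | zero => simp [iterSqSubTwo]
  | succ n ih =>
    have h2 : (Int.castRingHom (ZMod 2)) 2 = 0 := by decide
    rw [iterSqSubTwo, Polynomial.map_sub, Polynomial.map_pow, ih, Polynomial.map_C, h2, map_zero,
      sub_zero, ← pow_mul, ← pow_succ]

lemma two_dvd_coeff_iterSqSubTwo {n i : ℕ} (hi : i < 2 ^ n) :
    (2 : ℤ) ∣ (iterSqSubTwo n).coeff i := by
  have h := congrArg (Polynomial.coeff · i) (map_iterSqSubTwo_zmod_two n)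
  simp only [Polynomial.coeff_map, Polynomial.coeff_X_pow, hi.ne, if_false] at h
  exact (ZMod.intCast_zmod_eq_zero_iff_dvd _ 2).mp h

lemma irreducible_iterSqSubTwo (n : ℕ) : Irreducible (iterSqSubTwo n) := by
  cases n with
  | zero => exact Polynomial.irreducible_X
  | succ n =>
    obtain ⟨hm, hd⟩ := iterSqSubTwo_monic_natDegree (n + 1)
    have hpos : 0 < (iterSqSubTwo (n + 1)).natDegree := by rw [hd]; positivity
    have hprime : (Ideal.span {(2 : ℤ)}).IsPrime :=
      (Ideal.span_singleton_prime two_ne_zero).mpr Int.prime_two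
    refine Polynomial.IsEisensteinAt.irreducible (𝓟 := Ideal.span {(2 : ℤ)}) ⟨?_, ?_, ?_⟩
      hprime hm.isPrimitive hpos
    · rw [hm.leadingCoeff, Ideal.mem_span_singleton]
      decide
    · intro i hi
      rw [hd] at hi
      exact Ideal.mem_span_singleton.mpr (two_dvd_coeff_iterSqSubTwo hi)
    · obtain ⟨m, hm0⟩ := two_dvd_coeff_iterSqSubTwo (n := n) (i := 0) (by positivity)
      have h0 : (iterSqSubTwo (n + 1)).coeff 0 = (2 * m) ^ 2 - 2 := by
        rw [iterSqSubTwo, Polynomial.coeff_sub, Polynomial.coeff_C_zero, pow_two,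
          Polynomial.mul_coeff_zero, hm0, pow_two]
      rw [Ideal.span_singleton_pow, Ideal.mem_span_singleton, h0]
      rintro ⟨l, hl⟩
      have : 2 * (m ^ 2 - l) = 1 := by linarith
      omega

lemma natDegree_minpoly_c (n : ℕ) : (minpoly ℚ (c n)).natDegree = 2 ^ n := by
  obtain ⟨hm, hd⟩ := iterSqSubTwo_monic_natDegree n
  rw [← minpoly.eq_of_irreducible_of_monic (p := (iterSqSubTwo n).map (algebraMap ℤ ℚ)),
    hm.natDegree_map, hd]
  · exact (hm.irreducible_iff_irreducible_map_fraction_map).mp (irreducible_iterSqSubTwo n)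
  · rw [Polynomial.aeval_map_algebraMap]
    simpa [c_zero] using aeval_iterSqSubTwo n 0
  · exact hm.map _

lemma linearIndependent_pow_c (n : ℕ) :
    LinearIndependent ℚ (fun i : Fin (2 ^ n) => c n ^ (i : ℕ)) := by
  have h := linearIndependent_pow (K := ℚ) (c n)
  rwa [natDegree_minpoly_c] at h

/-- The rational span of the products `d S` with `S ⊆ {1, …, n}`. -/
noncomputable def spanD (n : ℕ) : Submodule ℚ ℝ :=
  Submodule.span ℚ (Set.range (fun S : {S : Finset ℕ // S ⊆ Finset.Icc 1 n} => d S.1))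

lemma d_mem_spanD {n : ℕ} {S : Finset ℕ} (hS : S ⊆ Finset.Icc 1 n) : d S ∈ spanD n :=
  Submodule.subset_span ⟨⟨S, hS⟩, rfl⟩

lemma spanD_le_succ (n : ℕ) : spanD n ≤ spanD (n + 1) := by
  refine Submodule.span_le.mpr ?_
  rintro _ ⟨⟨S, hS⟩, rfl⟩
  exact d_mem_spanD (hS.trans (Finset.Icc_subset_Icc_right n.le_succ))

lemma c_mul_mem_spanD {n : ℕ} {x : ℝ} (hx : x ∈ spanD n) : c n * x ∈ spanD n := by
  induction n generalizing x with
  | zero => simp [c_zero]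
  | succ n ih =>
    suffices h : spanD (n + 1) ≤ (spanD (n + 1)).comap (LinearMap.mulLeft ℚ (c (n + 1))) from h hx
    refine Submodule.span_le.mpr ?_
    rintro _ ⟨⟨S, hS⟩, rfl⟩
    change c (n + 1) * d S ∈ spanD (n + 1)
    by_cases hmem : n + 1 ∈ S
    · have hT : S.erase (n + 1) ⊆ Finset.Icc 1 n := by
        intro j hj
        have hj' := Finset.mem_Icc.mp (hS (Finset.mem_of_mem_erase hj))
        have := Finset.ne_of_mem_erase hj
        exact Finset.mem_Icc.mpr ⟨hj'.1, by omega⟩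
      have hd : d S = c (n + 1) * d (S.erase (n + 1)) := (Finset.mul_prod_erase S c hmem).symm
      have heq : c (n + 1) * d S
          = (2 : ℚ) • d (S.erase (n + 1)) + c n * d (S.erase (n + 1)) := by
        rw [hd, ← mul_assoc, ← pow_two, c_succ_sq, Rat.smul_def]
        push_cast
        ring
      rw [heq]
      exact spanD_le_succ n (add_mem (Submodule.smul_mem _ _ (d_mem_spanD hT))
        (ih (d_mem_spanD hT)))
    · have hd : c (n + 1) * d S = d (insert (n + 1) S) := (Finset.prod_insert hmem).symm
      rw [hd]
      exact d_mem_spanD (Finset.insert_subset (by simp) hS)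

lemma c_pow_mem_spanD (n i : ℕ) : c n ^ i ∈ spanD n := by
  induction i with
  | zero => simpa [d] using d_mem_spanD (Finset.empty_subset (Finset.Icc 1 n))
  | succ i ih =>
    rw [pow_succ']
    exact c_mul_mem_spanD ih

/-- for `n ≥ 1`, the `2^n` numbers `d S`, `S ⊆ {1,…,n}`, are linearly
independent over `ℚ`, and their `ℚ`-span equals the `ℚ`-span of the powers
`θ^0, θ^1, …, θ^(2^n - 1)` where `θ = 2·cos(π/2^(n+1))`. -/
theorem stmt_1 (n : ℕ) (hn : 1 ≤ n) :
    LinearIndependent ℚ (fun S : {S : Finset ℕ // S ⊆ Finset.Icc 1 n} => d S.1) ∧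
    Submodule.span ℚ (Set.range (fun S : {S : Finset ℕ // S ⊆ Finset.Icc 1 n} => d S.1)) =
      Submodule.span ℚ (Set.range
        (fun i : Fin (2 ^ n) => (2 * Real.cos (π / 2 ^ (n + 1))) ^ (i : ℕ))) := by
  let e : {S : Finset ℕ // S ⊆ Finset.Icc 1 n} ≃ {S // S ∈ (Finset.Icc 1 n).powerset} :=
    Equiv.subtypeEquivRight fun _ => Finset.mem_powerset.symm
  let _ : Fintype {S : Finset ℕ // S ⊆ Finset.Icc 1 n} := Fintype.ofEquiv _ e.symm
  have hcard : Fintype.card {S : Finset ℕ // S ⊆ Finset.Icc 1 n} = 2 ^ n := by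
    rw [Fintype.card_congr e, Fintype.card_coe, Finset.card_powerset, Nat.card_Icc,
      Nat.add_sub_cancel]
  have hle : Submodule.span ℚ (Set.range (fun i : Fin (2 ^ n) => c n ^ (i : ℕ))) ≤ spanD n := by
    refine Submodule.span_le.mpr ?_
    rintro _ ⟨i, rfl⟩
    exact c_pow_mem_spanD n i
  have hrank := finrank_span_eq_card (linearIndependent_pow_c n)
  rw [Fintype.card_fin] at hrank
  have : FiniteDimensional ℚ (spanD n) := FiniteDimensional.span_of_finite ℚ (Set.finite_range _)
  refine ⟨linearIndependent_iff_card_le_finrank_span.mpr ?_,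
    (Submodule.eq_of_le_of_finrank_le hle ?_).symm⟩
  · rw [hcard, ← hrank]
    exact Submodule.finrank_mono (t := spanD n) hle
  · rw [hrank, ← hcard]
    exact finrank_range_le_card _
end

section
/- Let n ≥ 1 be an integer, let i ∈ {1,…,n}, and let S ⊆ {1,…,n}. Let k = k_S(i) be the largest integer with 0 ≤ k ≤ i and k ∉ S (it exists since 0 ∉ S). Then the following identity of real numbers holds: c_i · d_S = d_{{k} ∪ (S ∖ {k+1,…,i})} + 2·∑_{j=k+1}^{i} d_{S ∖ {j,…,i}}. (Note that when k = 0 the first summand vanishes automatically, since c_0 = 0.) -/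
open Real

/-- The half-angle recursion `c_{j+1}² = 2 + c_j`. -/
theorem c_succ_mul_self (j : ℕ) : c (j + 1) * c (j + 1) = 2 + c j := by
  have h : π / 2 ^ (j + 1) = 2 * (π / 2 ^ (j + 1 + 1)) := by
    rw [pow_succ 2 (j + 1)]
    field_simp
  unfold c
  rw [h, Real.cos_two_mul]
  ring

theorem Finset.erase_succ_sdiff_Icc {i j : ℕ} (S : Finset ℕ) (hj : j ≤ i + 1) :
    S.erase (i + 1) \ Finset.Icc j i = S \ Finset.Icc j (i + 1) := by
  ext x
  simp only [Finset.mem_sdiff, Finset.mem_erase, Finset.mem_Icc]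
  grind

/-- The fusion rule for an arbitrary finite set `S` of natural numbers. -/
theorem c_mul_d {k i : ℕ} (hki : k ≤ i) (S : Finset ℕ) (hkS : k ∉ S)
    (hkmax : ∀ m, k < m → m ≤ i → m ∈ S) :
    c i * d S =
      d (insert k (S \ Finset.Icc (k + 1) i)) +
        2 * ∑ j ∈ Finset.Icc (k + 1) i, d (S \ Finset.Icc j i) := by
  induction i, hki using Nat.le_induction generalizing S with
  | base => simp [d, Finset.prod_insert hkS]
  | succ i hki ih =>
    have hmem : i + 1 ∈ S := hkmax _ (by omega) le_rfl
    have hd : d S = c (i + 1) * d (S.erase (i + 1)) :=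
      (Finset.mul_prod_erase S c hmem).symm
    have ih' := ih (S.erase (i + 1)) (fun h => hkS (Finset.mem_of_mem_erase h))
      fun m hkm hmi => Finset.mem_erase.2 ⟨by omega, hkmax m hkm (by omega)⟩
    have hsum : ∑ j ∈ Finset.Icc (k + 1) i, d (S.erase (i + 1) \ Finset.Icc j i) =
        ∑ j ∈ Finset.Icc (k + 1) i, d (S \ Finset.Icc j (i + 1)) :=
      Finset.sum_congr rfl fun j hj => by
        rw [Finset.erase_succ_sdiff_Icc S (by have := Finset.mem_Icc.1 hj; omega)]
    rw [Finset.erase_succ_sdiff_Icc S (by omega), hsum] at ih'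
    rw [Finset.sum_Icc_succ_top (by omega), Finset.Icc_self, Finset.sdiff_singleton_eq_erase,
      hd, ← mul_assoc, c_succ_mul_self, add_mul, ih']
    ring

/-- the fusion-rule identity
`c_i · d_S = d_{{k} ∪ (S ∖ {k+1,…,i})} + 2·∑_{j=k+1}^{i} d_{S ∖ {j,…,i}}`,
where `k = k_S(i)` is the largest integer `0 ≤ k ≤ i` with `k ∉ S`. -/
theorem stmt_3 (n : ℕ) (hn : 1 ≤ n) (i : ℕ) (hi : i ∈ Finset.Icc 1 n)
    (S : Finset ℕ) (hS : S ⊆ Finset.Icc 1 n) (k : ℕ) (hki : k ≤ i) (hkS : k ∉ S)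
    (hkmax : ∀ m, k < m → m ≤ i → m ∈ S) :
    c i * d S =
      d (insert k (S \ Finset.Icc (k + 1) i)) +
        2 * ∑ j ∈ Finset.Icc (k + 1) i, d (S \ Finset.Icc j i) :=
  c_mul_d hki S hkS hkmax
end

section
/- Define natural numbers d(m,n) for m, n ≥ 0 by: d(0,n) = 1 for all n ≥ 0; d(m,0) = 0 for m ≥ 1; and for m, n ≥ 1, d(m,n) = ∑_{s≥0} binomial(m−1, 2s) · 2^{m−1−2s} · d(s, n−1). Then for every n ≥ 0 and every real t > 1, the series ∑_{m≥0} d(m,n) · (t + t^{−1})^{−2m} converges, with sum equal to (t + t^{−1})·(t^{2^{n+1}−1} − t^{−(2^{n+1}−1)}) / (t^{2^{n+1}} − t^{−2^{n+1}}). -/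
open Real

/-- `d(0,n) = 1`, `d(m,0) = 0` for `m ≥ 1`, and for `m, n ≥ 1`
`d(m,n) = ∑_{s ≥ 0} C(m−1, 2s)·2^(m−1−2s)·d(s, n−1)` (all terms with `2s > m−1` vanish). -/
def dd : ℕ → ℕ → ℕ
  | 0, _ => 1
  | _ + 1, 0 => 0
  | m + 1, n + 1 =>
      ∑ s ∈ Finset.range (m + 1), Nat.choose m (2 * s) * 2 ^ (m - 2 * s) * dd s n
termination_by m n => n

/-- Generating function of a binomial column, weighted by powers of two. -/
lemma hasSum_choose_mul_two_pow_mul_pow (k : ℕ) {x : ℝ} (hx0 : 0 ≤ x) (hx : 2 * x < 1) :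
    HasSum (fun m : ℕ => (m.choose k : ℝ) * 2 ^ (m - k) * x ^ m)
      (x ^ k / (1 - 2 * x) ^ (k + 1)) := by
  have h := (hasSum_choose_mul_geometric_of_norm_lt_one k
    (r := 2 * x) (by rwa [Real.norm_of_nonneg (by positivity)])).mul_left (x ^ k)
  have hzero : ∑ m ∈ Finset.range k, (m.choose k : ℝ) * 2 ^ (m - k) * x ^ m = 0 :=
    Finset.sum_eq_zero fun m hm => by
      simp [Nat.choose_eq_zero_of_lt (Finset.mem_range.mp hm)]
  rw [← hasSum_nat_add_iff' k, hzero, sub_zero]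
  convert h using 1
  · rfl
  · ext m
    rw [Nat.add_sub_cancel, pow_add, mul_pow]
    ring
  · ring

/-- If `b m = ∑ₛ C(m, 2s) 2^(m-2s) a s`, the generating function of `b` at `x` is
`(1 - 2x)⁻¹` times that of `a` at `(x / (1 - 2x))²`. -/
lemma hasSum_sum_choose_mul_two_pow {a : ℕ → ℝ} (ha : ∀ s, 0 ≤ a s) {x A : ℝ}
    (hx0 : 0 ≤ x) (hx : 2 * x < 1)
    (hA : HasSum (fun s => a s * (x / (1 - 2 * x)) ^ (2 * s)) A) :
    HasSum (fun m : ℕ => (∑ s ∈ Finset.range (m + 1),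
        (m.choose (2 * s) : ℝ) * 2 ^ (m - 2 * s) * a s) * x ^ m) (A / (1 - 2 * x)) := by
  have hne : 1 - 2 * x ≠ 0 := by linarith
  let f : ℕ × ℕ → ℝ := fun p =>
    a p.1 * ((p.2.choose (2 * p.1) : ℝ) * 2 ^ (p.2 - 2 * p.1) * x ^ p.2)
  have hcol (s : ℕ) : HasSum (fun m => f (s, m))
      (a s * (x / (1 - 2 * x)) ^ (2 * s) / (1 - 2 * x)) := by
    convert (hasSum_choose_mul_two_pow_mul_pow (2 * s) hx0 hx).mul_left (a s) using 1
    · rfl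
    · rw [div_pow, pow_succ]
      field_simp
  have hcols := hA.div_const (1 - 2 * x)
  have hf : Summable f := by
    refine (summable_prod_of_nonneg fun p => ?_).mpr ⟨fun s => (hcol s).summable, ?_⟩
    · have := ha p.1
      simp only [f, Pi.zero_apply]
      positivity
    · simpa only [(hcol _).tsum_eq] using hcols.summable
  have htotal : HasSum f (A / (1 - 2 * x)) := by
    have h := hf.hasSum
    rwa [(h.prod_fiberwise hcol).unique hcols] at h
  refine ((Equiv.prodComm ℕ ℕ).hasSum_iff.mpr htotal).prod_fiberwise fun m => ?_
  rw [Finset.sum_mul]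
  have hrow : ∀ s ∉ Finset.range (m + 1), f (s, m) = 0 := fun s hs => by
    have hlt : m < 2 * s := by
      rw [Finset.mem_range] at hs
      omega
    simp [f, Nat.choose_eq_zero_of_lt hlt]
  convert hasSum_sum_of_ne_finset_zero hrow using 1
  · rfl
  · exact Finset.sum_congr rfl fun s _ => by simp only [f]; ring
  · infer_instance

/-- The closed form satisfies the functional equation of the generating functions. -/
lemma one_add_div_pow_sub_inv_pow {t : ℝ} (ht : 1 < t) (k : ℕ) :
    1 + ((t ^ 2) ^ k - (t ^ 2)⁻¹ ^ k) / ((t ^ 2) ^ (k + 1) - (t ^ 2)⁻¹ ^ (k + 1)) =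
      (t + t⁻¹) * (t ^ (2 * k + 1) - t⁻¹ ^ (2 * k + 1)) /
        (t ^ (2 * (k + 1)) - t⁻¹ ^ (2 * (k + 1))) := by
  have ht0 : t ≠ 0 := by positivity
  have hlt : t⁻¹ ^ (2 * (k + 1)) < t ^ (2 * (k + 1)) :=
    pow_lt_pow_left₀ ((inv_lt_one_of_one_lt₀ ht).trans ht) (by positivity) (by omega)
  have hden : t ^ (2 * (k + 1)) - t⁻¹ ^ (2 * (k + 1)) ≠ 0 := (sub_pos.mpr hlt).ne'
  rw [← inv_pow, ← pow_mul, ← pow_mul, ← pow_mul, ← pow_mul, one_add_div hden]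
  congr 1
  have hinv : t * t⁻¹ = 1 := mul_inv_cancel₀ ht0
  rw [show 2 * (k + 1) = 2 * k + 2 by ring]
  simp only [pow_succ _ (2 * k), pow_add _ (2 * k) 2]
  linear_combination (t⁻¹ ^ (2 * k) - t ^ (2 * k)) * hinv

/-- generating function of the invariants `d(m,n)`:
`∑_{m≥0} d(m,n)·(t+t⁻¹)^(−2m) = (t+t⁻¹)(t^(2^(n+1)−1) − t^(−(2^(n+1)−1)))/(t^(2^(n+1)) − t^(−2^(n+1)))`. -/
theorem stmt_7 (n : ℕ) (t : ℝ) (ht : 1 < t) :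
    HasSum (fun m : ℕ => (dd m n : ℝ) * ((t + t⁻¹)⁻¹) ^ (2 * m))
      ((t + t⁻¹) * (t ^ (2 ^ (n + 1) - 1) - t⁻¹ ^ (2 ^ (n + 1) - 1)) /
        (t ^ (2 ^ (n + 1)) - t⁻¹ ^ (2 ^ (n + 1)))) := by
  induction n generalizing t with
  | zero =>
    have hlt : t⁻¹ ^ 2 < t ^ 2 :=
      pow_lt_pow_left₀ ((inv_lt_one_of_one_lt₀ ht).trans ht) (by positivity) two_ne_zero
    convert hasSum_single (f := fun m : ℕ => (dd m 0 : ℝ) * ((t + t⁻¹)⁻¹) ^ (2 * m)) 0 ?_ using 1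
    · rw [div_eq_iff (by simpa using (sub_pos.mpr hlt).ne')]
      simp [dd]
      ring
    · rintro (_ | m) hm
      · exact absurd rfl hm
      · simp [dd]
  | succ n ih =>
    have ht0 : t ≠ 0 := by positivity
    have hT : 0 < t ^ 2 + (t ^ 2)⁻¹ := by positivity
    set x : ℝ := ((t + t⁻¹)⁻¹) ^ 2 with hx
    have hxT : x = (t ^ 2 + (t ^ 2)⁻¹ + 2)⁻¹ := by
      rw [hx, inv_pow]
      congr 1
      field_simp
      ring
    have hx0 : 0 < x := by positivity
    have hsub : 1 - 2 * x = (t ^ 2 + (t ^ 2)⁻¹) * x := by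
      have : (t ^ 2 + (t ^ 2)⁻¹ + 2) * x = 1 := by
        rw [hxT]
        exact mul_inv_cancel₀ (by positivity)
      linarith
    have hx1 : 2 * x < 1 := by
      have := mul_pos hT hx0
      linarith
    have hy : x / (1 - 2 * x) = (t ^ 2 + (t ^ 2)⁻¹)⁻¹ := by
      rw [hsub]
      field_simp
    have hprev := ih (t ^ 2) (one_lt_pow₀ ht two_ne_zero)
    rw [← hy] at hprev
    have hstep := (hasSum_sum_choose_mul_two_pow (fun s => Nat.cast_nonneg (dd s n))
      hx0.le hx1 hprev).mul_left x
    rw [← hasSum_nat_add_iff' 1]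
    convert hstep using 1
    · rfl
    · ext m
      rw [pow_mul, ← hx, dd]
      push_cast
      ring
    · obtain ⟨k, hk⟩ : ∃ k, 2 ^ (n + 1) = k + 1 :=
        Nat.exists_eq_succ_of_ne_zero (by positivity)
      have hk' : 2 ^ (n + 1 + 1) = 2 * (k + 1) := by rw [pow_succ, hk, mul_comm]
      rw [hk', hk, Nat.add_sub_cancel, show 2 * (k + 1) - 1 = 2 * k + 1 by omega,
        ← one_add_div_pow_sub_inv_pow ht k, hsub]
      simp only [Finset.sum_range_one, mul_zero, pow_zero, dd, Nat.cast_one]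
      field_simp
      ring
end

section
/- Let N ≥ 1 be an integer and let A be the adjacency matrix (with natural number entries) of the path graph on the vertex set {0, 1, …, N−1}, in which i and j are adjacent exactly when |i − j| = 1. Then for every real t > 1, the series ∑_{m≥0} (A^{2m})_{0,0} · (t + t^{−1})^{−2m} converges, with sum equal to (t + t^{−1})·(t^{N} − t^{−N}) / (t^{N+1} − t^{−(N+1)}). (Here (A^{2m})_{0,0} is the number of walks of length 2m in the path graph beginning and ending at the end vertex 0.) -/
open Real

/-- Adjacency matrix of the path graph on `{0,…,N−1}`: `i` adjacent to `j` iff `|i−j| = 1`. -/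
def pathAdj (N : ℕ) : Matrix (Fin N) (Fin N) ℕ :=
  Matrix.of fun i j => if (i : ℕ) + 1 = (j : ℕ) ∨ (j : ℕ) + 1 = (i : ℕ) then 1 else 0

theorem sum_pathAdj_mul {N : ℕ} (j : Fin N) (g : ℕ → ℝ) :
    ∑ k : Fin N, (pathAdj N j k : ℝ) * g k =
      (if (j : ℕ) = 0 then 0 else g (j - 1)) + if (j : ℕ) + 1 < N then g (j + 1) else 0 := by
  have hj := j.isLt
  have hterm : ∀ k : Fin N, (pathAdj N j k : ℝ) * g k =
      (if (k : ℕ) + 1 = j then g k else 0) + if (k : ℕ) = j + 1 then g k else 0 := by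
    intro k
    simp only [pathAdj, Matrix.of_apply]
    split_ifs <;> first | omega | simp
  rw [Finset.sum_congr rfl fun k _ => hterm k, Finset.sum_add_distrib,
    Fin.sum_univ_eq_sum_range (fun k => if k + 1 = (j : ℕ) then g k else 0),
    Fin.sum_univ_eq_sum_range (fun k => if k = (j : ℕ) + 1 then g k else 0)]
  congr 1
  · split_ifs with h
    · exact Finset.sum_eq_zero fun k _ => if_neg (by omega)
    · rw [Finset.sum_eq_single ((j : ℕ) - 1)]
      · exact if_pos (by omega)
      · exact fun k _ hk => if_neg (by omega)
      · intro hk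
        simp only [Finset.mem_range] at hk
        omega
  · simp

theorem sum_pathAdj_pow_le {N : ℕ} (i : Fin N) (m : ℕ) :
    ∑ j : Fin N, ((pathAdj N ^ m) i j : ℝ) ≤ 2 ^ m := by
  induction m with
  | zero => simp [Matrix.one_apply]
  | succ m ih =>
    simp only [pow_succ (pathAdj N), Matrix.mul_apply, Nat.cast_sum, Nat.cast_mul]
    rw [Finset.sum_comm]
    simp only [← Finset.mul_sum]
    calc ∑ k, ((pathAdj N ^ m) i k : ℝ) * ∑ j, (pathAdj N k j : ℝ)
        ≤ ∑ k, ((pathAdj N ^ m) i k : ℝ) * 2 := by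
          gcongr with k
          have h := sum_pathAdj_mul k fun _ => 1
          simp only [mul_one] at h
          rw [h]
          split_ifs <;> norm_num
      _ ≤ 2 ^ (m + 1) := by
          rw [← Finset.sum_mul, pow_succ]
          gcongr

theorem pathAdj_pow_apply_eq_zero {N : ℕ} (m : ℕ) (i j : Fin N)
    (h : Odd (m + (i : ℕ) + (j : ℕ))) : (pathAdj N ^ m) i j = 0 := by
  induction m generalizing j with
  | zero =>
    rw [pow_zero, Matrix.one_apply_ne]
    rintro rfl
    grind
  | succ m ih =>
    rw [pow_succ, Matrix.mul_apply]
    refine Finset.sum_eq_zero fun k _ => ?_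
    by_cases hk : (k : ℕ) + 1 = j ∨ (j : ℕ) + 1 = k
    · rw [ih k (by grind), zero_mul]
    · simp [pathAdj, hk]

/-- If `v = e_i + s⁻¹ A v` for the path adjacency matrix `A` and `s > 2`, then `v i` is the
generating function of closed walks at `i`, evaluated at `s⁻¹`. -/
theorem hasSum_pathAdj_pow {N : ℕ} (i : Fin N) {s : ℝ} (hs : 2 < s) (v : Fin N → ℝ)
    (hv : ∀ j, v j = (if j = i then 1 else 0) + s⁻¹ * ∑ k, (pathAdj N j k : ℝ) * v k) :
    HasSum (fun m : ℕ => ((pathAdj N ^ m) i i : ℝ) * s⁻¹ ^ m) (v i) := by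
  have hs0 : 0 < s := by linarith
  rw [hasSum_iff_tendsto_nat_of_nonneg fun m => by positivity]
  set R : ℕ → ℝ := fun m => s⁻¹ ^ m * ∑ j, ((pathAdj N ^ m) i j : ℝ) * v j with hR
  have hstep : ∀ m, R m = ((pathAdj N ^ m) i i : ℝ) * s⁻¹ ^ m + R (m + 1) := by
    intro m
    have hsum : ∑ j, ((pathAdj N ^ m) i j : ℝ) * v j =
        ((pathAdj N ^ m) i i : ℝ) + s⁻¹ * ∑ j, ((pathAdj N ^ (m + 1)) i j : ℝ) * v j := by
      simp only [pow_succ (pathAdj N), Matrix.mul_apply, Nat.cast_sum, Nat.cast_mul,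
        Finset.sum_mul]
      rw [Finset.sum_comm, Finset.mul_sum]
      calc ∑ j, ((pathAdj N ^ m) i j : ℝ) * v j
          = ∑ j, ((if j = i then ((pathAdj N ^ m) i j : ℝ) else 0) +
              s⁻¹ * ∑ k, ((pathAdj N ^ m) i j : ℝ) * (pathAdj N j k : ℝ) * v k) := by
            refine Finset.sum_congr rfl fun j _ => ?_
            simp only [mul_assoc, ← Finset.mul_sum]
            rw [hv j]
            split_ifs <;> ring
        _ = _ := by simp [Finset.sum_add_distrib]
    simp only [hR]
    rw [hsum]
    ring
  have hpartial : ∀ n, ∑ m ∈ Finset.range n, ((pathAdj N ^ m) i i : ℝ) * s⁻¹ ^ m = v i - R n := by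
    intro n
    induction n with
    | zero => simp [hR, Matrix.one_apply]
    | succ n ih => rw [Finset.sum_range_succ, ih, hstep n]; ring
  have hlim : Filter.Tendsto R Filter.atTop (nhds 0) := by
    have hgeom : Filter.Tendsto (fun m : ℕ => (2 * s⁻¹) ^ m * ∑ j, |v j|) Filter.atTop (nhds 0) := by
      have hlt : 2 * s⁻¹ < 1 := by
        rw [← div_eq_mul_inv, div_lt_one hs0]
        exact hs
      simpa using (tendsto_pow_atTop_nhds_zero_of_lt_one (by positivity) hlt).mul_const
        (∑ j, |v j|)
    refine squeeze_zero_norm (fun m => ?_) hgeom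
    rw [Real.norm_eq_abs, abs_mul, abs_of_nonneg (by positivity : 0 ≤ s⁻¹ ^ m), mul_pow,
      mul_comm (2 ^ m), mul_assoc]
    gcongr
    calc |∑ j, ((pathAdj N ^ m) i j : ℝ) * v j|
        ≤ ∑ j, ((pathAdj N ^ m) i j : ℝ) * |v j| := by
          refine (Finset.abs_sum_le_sum_abs _ _).trans_eq (Finset.sum_congr rfl fun j _ => ?_)
          rw [abs_mul, Nat.abs_cast]
      _ ≤ ∑ j, ((pathAdj N ^ m) i j : ℝ) * ∑ k, |v k| := by
          gcongr with j
          exact Finset.single_le_sum (fun k _ => abs_nonneg (v k)) (Finset.mem_univ j)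
      _ ≤ 2 ^ m * ∑ j, |v j| := by
          rw [← Finset.sum_mul]
          gcongr
          exact sum_pathAdj_pow_le i m
  simp only [hpartial]
  simpa using hlim.const_sub (v i)

/-- for `t > 1`,
`∑_{m≥0} (A^(2m))_{0,0}·(t+t⁻¹)^(−2m) = (t+t⁻¹)(t^N − t^(−N))/(t^(N+1) − t^(−(N+1)))`,
where `A` is the adjacency matrix of the path graph on `N ≥ 1` vertices. -/
theorem stmt_8 (N : ℕ) (hN : 1 ≤ N) (t : ℝ) (ht : 1 < t) :
    HasSum
      (fun m : ℕ =>
        (((pathAdj N ^ (2 * m)) ⟨0, hN⟩ ⟨0, hN⟩ : ℕ) : ℝ) * ((t + t⁻¹)⁻¹) ^ (2 * m))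
      ((t + t⁻¹) * (t ^ N - t⁻¹ ^ N) / (t ^ (N + 1) - t⁻¹ ^ (N + 1))) := by
  have ht0 : 0 < t := by linarith
  have htt : t * t⁻¹ = 1 := mul_inv_cancel₀ ht0.ne'
  have hs : 2 < t + t⁻¹ := by
    have hi : 0 < t⁻¹ := by positivity
    nlinarith [mul_pos hi (pow_pos (sub_pos.2 ht) 2)]
  set W : ℕ → ℝ := fun n => t ^ n - t⁻¹ ^ n with hW
  have hrec : ∀ n, (t + t⁻¹) * W (n + 1) = W (n + 2) + W n := by
    intro n
    simp only [hW]
    linear_combination (t ^ n - t⁻¹ ^ n) * htt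
  have hpos : 0 < W (N + 1) := by
    have h1 : 1 < t ^ (N + 1) := one_lt_pow₀ ht (by omega)
    have h2 : t⁻¹ ^ (N + 1) < 1 :=
      pow_lt_one₀ (by positivity) (inv_lt_one_of_one_lt₀ ht) (by omega)
    simp only [hW]
    linarith
  have key := hasSum_pathAdj_pow (⟨0, hN⟩ : Fin N) hs
    (fun j => (t + t⁻¹) * W (N - j) / W (N + 1)) (by
      intro j
      rw [sum_pathAdj_mul j fun k => (t + t⁻¹) * W (N - k) / W (N + 1)]
      have hs0 : t + t⁻¹ ≠ 0 := by linarith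
      have hW0 : W 0 = 0 := by simp [hW]
      obtain ⟨d, hd⟩ : ∃ d, N = j + (d + 1) := ⟨N - j - 1, by omega⟩
      have hupper : (if (j : ℕ) + 1 < N then (t + t⁻¹) * W (N - (j + 1)) / W (N + 1) else 0) =
          (t + t⁻¹) * W d / W (N + 1) := by
        split_ifs with h
        · rw [show N - ((j : ℕ) + 1) = d by omega]
        · rw [show d = 0 by omega, hW0]
          simp
      rw [hupper, show N - (j : ℕ) = d + 1 by omega, hrec d]
      by_cases hj : (j : ℕ) = 0
      · rw [if_pos (Fin.ext hj), if_pos hj, show d + 2 = N + 1 by omega]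
        field_simp
        ring
      · rw [if_neg fun h => hj (congrArg Fin.val h), if_neg hj,
          show N - ((j : ℕ) - 1) = d + 2 by omega]
        field_simp
        ring)
  have hinj : Function.Injective fun m : ℕ => 2 * m := fun a b h => by simpa using h
  refine (hinj.hasSum_iff fun m hm => ?_).2 key
  have hodd : Odd m := by
    rw [← Nat.not_even_iff_odd]
    rintro ⟨k, hk⟩
    exact hm ⟨k, by simp only; omega⟩
  rw [pathAdj_pow_apply_eq_zero m _ _ (by simpa using hodd)]
  simp
end

section
/- Define natural numbers d(m,n) for m, n ≥ 0 by: d(0,n) = 1 for all n ≥ 0; d(m,0) = 0 for m ≥ 1; and for m, n ≥ 1, d(m,n) = ∑_{s≥0} binomial(m−1, 2s) · 2^{m−1−2s} · d(s, n−1). Let A_n be the adjacency matrix of the path graph on the vertex set {0, 1, …, 2^{n+1}−2} (so with 2^{n+1}−1 vertices, i adjacent to j exactly when |i−j| = 1). Then for all m, n ≥ 0, d(m,n) = ((A_n)^{2m})_{0,0}, the number of walks of length 2m in this path graph beginning and ending at the end vertex 0. -/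
open Real

/-- The incidence matrix of the inclusion `j ↦ 2j + 1` of `{0,…,N−1}` as the odd vertices
of `{0,…,2N}`. -/
def oddVertices (N : ℕ) : Matrix (Fin (2 * N + 1)) (Fin N) ℕ :=
  Matrix.of fun i j => if (i : ℕ) = 2 * j + 1 then 1 else 0

theorem mul_oddVertices_apply (N : ℕ) (M : Matrix (Fin (2 * N + 1)) (Fin (2 * N + 1)) ℕ)
    (i : Fin (2 * N + 1)) (j : Fin N) :
    (M * oddVertices N) i j = M i ⟨2 * j + 1, by omega⟩ := by
  rw [Matrix.mul_apply, Finset.sum_eq_single ⟨2 * (j : ℕ) + 1, by omega⟩]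
  · simp [oddVertices]
  · intro k _ hk
    have : (k : ℕ) ≠ 2 * j + 1 := fun h => hk (Fin.ext h)
    simp [oddVertices, this]
  · simp

theorem oddVertices_mul_apply_odd (N : ℕ) (M : Matrix (Fin N) (Fin N) ℕ) (k j : Fin N) :
    (oddVertices N * M) ⟨2 * k + 1, by omega⟩ j = M k j := by
  rw [Matrix.mul_apply, Finset.sum_eq_single k]
  · simp [oddVertices]
  · intro l _ hl
    have : (k : ℕ) ≠ l := fun h => hl (Fin.ext h.symm)
    simp [oddVertices, this]
  · simp

theorem oddVertices_mul_apply_even (N : ℕ) (M : Matrix (Fin N) (Fin N) ℕ)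
    (i : Fin (2 * N + 1)) (hi : Even (i : ℕ)) (j : Fin N) :
    (oddVertices N * M) i j = 0 := by
  rw [Matrix.mul_apply]
  refine Finset.sum_eq_zero fun k _ => ?_
  have : (i : ℕ) ≠ 2 * k + 1 := by
    obtain ⟨r, hr⟩ := hi
    omega
  simp [oddVertices, this]

theorem pathAdj_sq_apply_odd (N : ℕ) (i : Fin (2 * N + 1)) (j : Fin N) :
    (pathAdj (2 * N + 1) ^ 2) i ⟨2 * j + 1, by omega⟩ =
      pathAdj (2 * N + 1) i ⟨2 * j, by omega⟩ + pathAdj (2 * N + 1) i ⟨2 * j + 2, by omega⟩ := by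
  rw [sq, Matrix.mul_apply,
    Finset.sum_eq_add (⟨2 * (j : ℕ), by omega⟩ : Fin (2 * N + 1)) ⟨2 * (j : ℕ) + 2, by omega⟩]
  · simp [pathAdj]
  · simp
  · intro k _ hk
    have h₁ : (k : ℕ) ≠ 2 * j := fun h => hk.1 (Fin.ext h)
    have h₂ : (k : ℕ) ≠ 2 * j + 2 := fun h => hk.2 (Fin.ext h)
    have h₃ : ¬ ((k : ℕ) + 1 = 2 * j + 1 ∨ 2 * (j : ℕ) + 1 + 1 = k) := by omega
    simp only [pathAdj, Matrix.of_apply, if_neg h₃, mul_zero]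
  · simp
  · simp

/-- Two steps between odd vertices of the path on `2N + 1` vertices either return to the start,
in two ways, or make one step of the path on `N` vertices. -/
theorem pathAdj_sq_mul_oddVertices (N : ℕ) :
    pathAdj (2 * N + 1) ^ 2 * oddVertices N = oddVertices N * (pathAdj N + 2) := by
  ext i j
  rw [mul_oddVertices_apply, pathAdj_sq_apply_odd]
  rcases Nat.even_or_odd (i : ℕ) with hi | ⟨k, hk⟩
  · rw [oddVertices_mul_apply_even _ _ _ hi]
    obtain ⟨r, hr⟩ := hi
    simp only [pathAdj, Matrix.of_apply]
    rw [if_neg (by omega), if_neg (by omega)]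
  · have hkN : k < N := by omega
    obtain ⟨i, hi⟩ := i
    obtain rfl : i = 2 * k + 1 := hk
    rw [oddVertices_mul_apply_odd N _ ⟨k, hkN⟩ j, Matrix.add_apply, Matrix.ofNat_apply]
    simp only [pathAdj, Matrix.of_apply, Fin.ext_iff]
    split_ifs <;> first | rfl | omega

theorem pathAdj_pow_mul_oddVertices (N m : ℕ) :
    pathAdj (2 * N + 1) ^ (2 * m) * oddVertices N = oddVertices N * (pathAdj N + 2) ^ m := by
  induction m with
  | zero => simp
  | succ m ih =>
    rw [Nat.mul_succ, pow_add, Matrix.mul_assoc, pathAdj_sq_mul_oddVertices,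
      ← Matrix.mul_assoc, ih, Matrix.mul_assoc, pow_succ]

/-- A closed walk at an end vertex starts and ends with the edge to its only neighbour. -/
theorem pathAdj_pow_add_two_apply_zero (N k : ℕ) (hN : 1 < N) :
    (pathAdj N ^ (k + 2)) ⟨0, by omega⟩ ⟨0, by omega⟩ =
      (pathAdj N ^ k) ⟨1, hN⟩ ⟨1, hN⟩ := by
  have adj_zero (i : Fin N) : pathAdj N i ⟨0, by omega⟩ = if i = ⟨1, hN⟩ then 1 else 0 := by
    simp [pathAdj, Fin.ext_iff, eq_comm]
  have zero_adj (i : Fin N) : pathAdj N ⟨0, by omega⟩ i = if i = ⟨1, hN⟩ then 1 else 0 := by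
    simp [pathAdj, Fin.ext_iff, eq_comm]
  rw [pow_succ, pow_succ', Matrix.mul_apply]
  simp only [adj_zero, mul_ite, mul_one, mul_zero, Finset.sum_ite_eq', Finset.mem_univ, if_true]
  simp [Matrix.mul_apply, zero_adj]

theorem pathAdj_pow_apply_zero_eq (N m : ℕ) (hN : 0 < N) :
    (pathAdj (2 * N + 1) ^ (2 * (m + 1))) ⟨0, by omega⟩ ⟨0, by omega⟩ =
      ((pathAdj N + 2) ^ m) ⟨0, hN⟩ ⟨0, hN⟩ := by
  rw [Nat.mul_succ, pathAdj_pow_add_two_apply_zero _ _ (by omega)]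
  refine (mul_oddVertices_apply N _ _ ⟨0, hN⟩).symm.trans ?_
  rw [pathAdj_pow_mul_oddVertices]
  exact oddVertices_mul_apply_odd N _ ⟨0, hN⟩ ⟨0, hN⟩

theorem pathAdj_pow_apply_of_odd (N k : ℕ) (i j : Fin N) (h : Odd ((i : ℕ) + j + k)) :
    (pathAdj N ^ k) i j = 0 := by
  induction k generalizing j with
  | zero =>
    have : i ≠ j := by
      rintro rfl
      obtain ⟨r, hr⟩ := h
      omega
    simp [this]
  | succ k ih =>
    rw [pow_succ, Matrix.mul_apply]
    refine Finset.sum_eq_zero fun l _ => ?_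
    by_cases hl : (l : ℕ) + 1 = j ∨ (j : ℕ) + 1 = l
    · rw [ih l (by rw [Nat.odd_iff] at h ⊢; omega), zero_mul]
    · simp [pathAdj, hl]

theorem sum_range_two_mul_eq_sum_even {M : Type*} [AddCommMonoid M] (f : ℕ → M) (n : ℕ)
    (hf : ∀ i, f (2 * i + 1) = 0) :
    ∑ k ∈ Finset.range (2 * n), f k = ∑ s ∈ Finset.range n, f (2 * s) := by
  induction n with
  | zero => simp
  | succ n ih =>
    rw [Nat.mul_succ, Finset.sum_range_succ, Finset.sum_range_succ, ih, hf, add_zero,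
      Finset.sum_range_succ]

theorem pathAdj_add_two_pow_apply_zero (N m : ℕ) (hN : 0 < N) :
    ((pathAdj N + 2) ^ m) ⟨0, hN⟩ ⟨0, hN⟩ =
      ∑ s ∈ Finset.range (m + 1),
        m.choose (2 * s) * 2 ^ (m - 2 * s) * (pathAdj N ^ (2 * s)) ⟨0, hN⟩ ⟨0, hN⟩ := by
  rw [(Commute.ofNat_right (pathAdj N) 2).add_pow, Matrix.sum_apply]
  have entry (k : ℕ) : (pathAdj N ^ k * 2 ^ (m - k) * (m.choose k : Matrix (Fin N) (Fin N) ℕ))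
      ⟨0, hN⟩ ⟨0, hN⟩ = m.choose k * 2 ^ (m - k) * (pathAdj N ^ k) ⟨0, hN⟩ ⟨0, hN⟩ := by
    have : pathAdj N ^ k * 2 ^ (m - k) * (m.choose k : Matrix (Fin N) (Fin N) ℕ) =
        (m.choose k * 2 ^ (m - k)) • pathAdj N ^ k := by
      rw [nsmul_eq_mul, Nat.cast_comm]
      push_cast
      rw [mul_assoc, ← Nat.cast_comm]
    rw [this, Matrix.smul_apply, smul_eq_mul]
  simp only [entry]
  rw [← sum_range_two_mul_eq_sum_even
    (fun k => m.choose k * 2 ^ (m - k) * (pathAdj N ^ k) ⟨0, hN⟩ ⟨0, hN⟩)]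
  · refine Finset.sum_subset (Finset.range_mono (by omega)) fun k _ hk => ?_
    rw [Nat.choose_eq_zero_of_lt (by simpa using hk), zero_mul, zero_mul]
  · intro i
    rw [pathAdj_pow_apply_of_odd _ _ _ _ (by simp), mul_zero]

theorem dd_eq_pathAdj_pow (n : ℕ) : ∀ (m N : ℕ) (_ : N + 1 = 2 ^ (n + 1)) (h : 0 < N),
    dd m n = (pathAdj N ^ (2 * m)) ⟨0, h⟩ ⟨0, h⟩ := by
  induction n with
  | zero =>
    intro m N hN h
    obtain rfl : N = 1 := by omega
    cases m with
    | zero => simp [dd]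
    | succ m =>
      have : pathAdj 1 = 0 := by
        ext i j
        simp [pathAdj]
      simp [dd, this]
  | succ n ih =>
    intro m N hN h
    cases m with
    | zero => simp [dd]
    | succ m =>
      have hpos : 1 < 2 ^ (n + 1) := Nat.one_lt_two_pow_iff.mpr (Nat.succ_ne_zero n)
      obtain ⟨K, hK⟩ : ∃ K, K + 1 = 2 ^ (n + 1) := ⟨2 ^ (n + 1) - 1, by omega⟩
      obtain rfl : N = 2 * K + 1 := by
        rw [pow_succ] at hN
        omega
      have hK0 : 0 < K := by omega
      rw [pathAdj_pow_apply_zero_eq K m hK0, pathAdj_add_two_pow_apply_zero, dd]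
      exact Finset.sum_congr rfl fun s _ => by rw [ih s K hK hK0]

/-- `d(m,n)` equals the number of walks of length `2m` starting and ending
at the end vertex `0` of the path graph on `2^(n+1) − 1` vertices. -/
theorem stmt_9 (m n : ℕ) :
    dd m n =
      (pathAdj (2 ^ (n + 1) - 1) ^ (2 * m))
        ⟨0, by have : 1 < 2 ^ (n + 1) := Nat.one_lt_two_pow_iff.mpr (Nat.succ_ne_zero n); omega⟩
        ⟨0, by have : 1 < 2 ^ (n + 1) := Nat.one_lt_two_pow_iff.mpr (Nat.succ_ne_zero n); omega⟩ := by
  exact dd_eq_pathAdj_pow n m _ (Nat.sub_add_cancel Nat.one_le_two_pow) _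
end

section
/- Let p be a prime, n ≥ 1 an integer, q = p^n, and let k be an algebraically closed field of characteristic p. Let F be the unique subfield of k with q elements. Let V = k², on which 2×2 matrices over k act by the standard action, and for a 2×2 matrix g over k let g^{⊗r} denote the induced k-linear endomorphism of the r-th tensor power V^{⊗r}. Let r, s be natural numbers with r < q and s < q, and let A : V^{⊗r} → V^{⊗s} be a k-linear map such that A ∘ g^{⊗r} = g^{⊗s} ∘ A for every g ∈ SL(2,k) all of whose entries lie in F. Then A ∘ g^{⊗r} = g^{⊗s} ∘ A for every g ∈ SL(2,k). -/
open scoped TensorProduct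

/-- The endomorphism `g^{⊗r}` of `V^{⊗r}` (with `V = k²`) induced by a `2×2` matrix `g`. -/
noncomputable def tensorPowerMap (k : Type*) [CommRing k] (r : ℕ)
    (g : Matrix (Fin 2) (Fin 2) k) :
    (⨂[k]^r (Fin 2 → k)) →ₗ[k] (⨂[k]^r (Fin 2 → k)) :=
  PiTensorProduct.map fun _ => Matrix.toLin' g

open Polynomial in
/-- A linear functional of `(1 + t N)^{⊗r} y` is polynomial in `t`, of degree at most `r`. -/
theorem exists_polynomial_tensorPowerMap {k : Type*} [Field k] (r : ℕ)
    (N : Matrix (Fin 2) (Fin 2) k) (φ : (⨂[k]^r (Fin 2 → k)) →ₗ[k] k)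
    (y : ⨂[k]^r (Fin 2 → k)) :
    ∃ P : k[X], P.natDegree ≤ r ∧ ∀ t : k, φ (tensorPowerMap k r (1 + t • N) y) = P.eval t := by
  induction y using PiTensorProduct.induction_on with
  | smul_tprod c v =>
    refine ⟨∑ S : Finset (Fin r), C (c * φ (PiTensorProduct.tprod k
      (S.piecewise (fun i => Matrix.toLin' N (v i)) v))) * X ^ S.card, ?_, fun t => ?_⟩
    · refine natDegree_sum_le_of_forall_le _ _ fun S _ => ?_
      exact (natDegree_C_mul_X_pow_le _ _).trans (by simpa using S.card_le_univ)
    · have hv : (fun i => Matrix.toLin' (1 + t • N) (v i)) =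
          (fun i => t • Matrix.toLin' N (v i)) + v := by
        funext i
        simp [add_comm]
      rw [tensorPowerMap, map_smul, PiTensorProduct.map_tprod, hv, MultilinearMap.map_add_univ,
        map_smul, map_sum, eval_finsetSum, smul_eq_mul, Finset.mul_sum]
      refine Finset.sum_congr rfl fun S _ => ?_
      have hS : S.piecewise (fun i => t • Matrix.toLin' N (v i)) v =
          S.piecewise (fun i => (fun _ => t) i •
            S.piecewise (fun i => Matrix.toLin' N (v i)) v i)
            (S.piecewise (fun i => Matrix.toLin' N (v i)) v) := by
        funext i
        by_cases hi : i ∈ S <;> simp [hi]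
      rw [hS, MultilinearMap.map_piecewise_smul]
      simp
      ring
  | add x y hx hy =>
    obtain ⟨P, hP, hPe⟩ := hx
    obtain ⟨Q, hQ, hQe⟩ := hy
    exact ⟨P + Q, natDegree_add_le_of_degree_le hP hQ, fun t => by simp [hPe, hQe]⟩

theorem tensorPowerMap_mul {k : Type*} [CommRing k] (r : ℕ) (g h : Matrix (Fin 2) (Fin 2) k) :
    tensorPowerMap k r (g * h) = tensorPowerMap k r g ∘ₗ tensorPowerMap k r h := by
  simp only [tensorPowerMap, Matrix.toLin'_mul, PiTensorProduct.map_comp]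

/-- A linear map that intertwines the tensor powers of `g` and of `h` intertwines those of `g * h`. -/
theorem tensorPowerMap_intertwines_mul {k : Type*} [CommRing k] {r s : ℕ}
    {A : (⨂[k]^r (Fin 2 → k)) →ₗ[k] (⨂[k]^s (Fin 2 → k))} {g h : Matrix (Fin 2) (Fin 2) k}
    (hg : A ∘ₗ tensorPowerMap k r g = tensorPowerMap k s g ∘ₗ A)
    (hh : A ∘ₗ tensorPowerMap k r h = tensorPowerMap k s h ∘ₗ A) :
    A ∘ₗ tensorPowerMap k r (g * h) = tensorPowerMap k s (g * h) ∘ₗ A := by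
  rw [tensorPowerMap_mul, tensorPowerMap_mul, ← LinearMap.comp_assoc, hg, LinearMap.comp_assoc, hh,
    LinearMap.comp_assoc]

open Polynomial in
/-- If `A` intertwines the tensor powers of `1 + t N` for more than `max r s` values of `t`, then it
does so for every `t`. -/
theorem tensorPowerMap_intertwines_one_add_smul {k : Type*} [Field k] {r s : ℕ}
    {A : (⨂[k]^r (Fin 2 → k)) →ₗ[k] (⨂[k]^s (Fin 2 → k))} (N : Matrix (Fin 2) (Fin 2) k)
    (T : Finset k) (hr : r < T.card) (hs : s < T.card)
    (hT : ∀ t ∈ T, A ∘ₗ tensorPowerMap k r (1 + t • N) = tensorPowerMap k s (1 + t • N) ∘ₗ A)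
    (t : k) :
    A ∘ₗ tensorPowerMap k r (1 + t • N) = tensorPowerMap k s (1 + t • N) ∘ₗ A := by
  refine LinearMap.ext fun y => ?_
  rw [LinearMap.comp_apply, LinearMap.comp_apply, ← sub_eq_zero, ← Module.forall_dual_apply_eq_zero_iff k]
  intro φ
  obtain ⟨P, hP, hPe⟩ := exists_polynomial_tensorPowerMap r N (φ ∘ₗ A) y
  obtain ⟨Q, hQ, hQe⟩ := exists_polynomial_tensorPowerMap s N φ (A y)
  have hPQ : P = Q := by
    refine eq_of_degree_sub_lt_of_eval_finset_eq T ?_ fun u hu => ?_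
    · refine (degree_le_natDegree).trans_lt ?_
      exact_mod_cast (natDegree_sub_le P Q).trans_lt
        (max_lt (hP.trans_lt hr) (hQ.trans_lt hs))
    · rw [← hPe, ← hQe]
      exact congrArg φ (LinearMap.congr_fun (hT u hu) _)
  have h := hPe t
  rw [hPQ, ← hQe t] at h
  rw [map_sub, sub_eq_zero]
  exact h

/-- A property of `2 × 2` matrices that is closed under products and holds for all elementary
unipotent matrices holds for all matrices of determinant one. -/
theorem Matrix.det_one_induction_fin_two {k : Type*} [Field k]
    {p : Matrix (Fin 2) (Fin 2) k → Prop} (mul : ∀ g h, p g → p h → p (g * h))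
    (upper : ∀ t, p !![1, t; 0, 1]) (lower : ∀ t, p !![1, 0; t, 1])
    (g : Matrix (Fin 2) (Fin 2) k) (hg : g.det = 1) : p g := by
  have of_ne_zero : ∀ a b c d : k, a * d - b * c = 1 → c ≠ 0 → p !![a, b; c, d] := by
    intro a b c d h hc
    have hb : b = (a * d - 1) / c := by
      field_simp
      linear_combination -h
    have : !![a, b; c, d] =
        !![1, (a - 1) / c; 0, 1] * !![1, 0; c, 1] * !![1, (d - 1) / c; 0, 1] := by
      subst hb
      ext i j
      fin_cases i <;> fin_cases j <;> simp [Matrix.mul_apply, Fin.sum_univ_two] <;> field_simp <;>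
        ring
    rw [this]
    exact mul _ _ (mul _ _ (upper _) (lower _)) (upper _)
  rw [Matrix.det_fin_two] at hg
  rw [Matrix.eta_fin_two g]
  by_cases hc : g 1 0 = 0
  · have ha : g 0 0 ≠ 0 := by
      rintro ha
      simp [ha, hc] at hg
    have : !![g 0 0, g 0 1; g 1 0, g 1 1] =
        !![1, 0; -1, 1] * !![g 0 0, g 0 1; g 0 0, g 0 1 + g 1 1] := by
      simp [hc]
    rw [this]
    refine mul _ _ (lower _) (of_ne_zero _ _ _ _ ?_ ha)
    rw [hc] at hg
    linear_combination hg
  · exact of_ne_zero _ _ _ _ hg hc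

/-- if `r, s < q = p^n` and a `k`-linear map `A : V^{⊗r} → V^{⊗s}` commutes
with `g^{⊗•}` for every `g ∈ SL(2, F_q)`, then it commutes with `g^{⊗•}` for every
`g ∈ SL(2, k)`. -/
theorem stmt_11 (p : ℕ) (hp : p.Prime) (n : ℕ) (hn : 1 ≤ n) (q : ℕ) (hq : q = p ^ n)
    (k : Type*) [Field k] [IsAlgClosed k] [CharP k p]
    (F : Subfield k) (hF : Nat.card F = q)
    (r s : ℕ) (hr : r < q) (hs : s < q)
    (A : (⨂[k]^r (Fin 2 → k)) →ₗ[k] (⨂[k]^s (Fin 2 → k)))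
    (hA : ∀ g : Matrix.SpecialLinearGroup (Fin 2) k,
      (∀ i j, (g : Matrix (Fin 2) (Fin 2) k) i j ∈ F) →
        A ∘ₗ tensorPowerMap k r g = tensorPowerMap k s g ∘ₗ A) :
    ∀ g : Matrix.SpecialLinearGroup (Fin 2) k,
      A ∘ₗ tensorPowerMap k r g = tensorPowerMap k s g ∘ₗ A := by
  have hcard : 0 < Nat.card F := by omega
  have : Finite F := Nat.finite_of_card_ne_zero hcard.ne'
  have hfin : (F : Set k).Finite := Set.toFinite _
  have hT : hfin.toFinset.card = q := by
    rw [← hF, ← Set.ncard_eq_toFinset_card _ hfin]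
    rfl
  have upper : ∀ t : k, (1 : Matrix (Fin 2) (Fin 2) k) + t • !![0, 1; 0, 0] = !![1, t; 0, 1] := by
    intro t
    simp [Matrix.one_fin_two]
  have lower : ∀ t : k, (1 : Matrix (Fin 2) (Fin 2) k) + t • !![0, 0; 1, 0] = !![1, 0; t, 1] := by
    intro t
    simp [Matrix.one_fin_two]
  intro g
  refine Matrix.det_one_induction_fin_two
    (p := fun g => A ∘ₗ tensorPowerMap k r g = tensorPowerMap k s g ∘ₗ A)
    (fun _ _ => tensorPowerMap_intertwines_mul) (fun t => ?_) (fun t => ?_) g.1 g.2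
  · rw [← upper]
    refine tensorPowerMap_intertwines_one_add_smul _ hfin.toFinset (hT ▸ hr) (hT ▸ hs) ?_ t
    intro u hu
    rw [upper]
    refine hA ⟨!![1, u; 0, 1], by simp [Matrix.det_fin_two]⟩ fun i j => ?_
    have hu' : u ∈ F := by simpa using hu
    fin_cases i <;> fin_cases j <;> simp [hu']
  · rw [← lower]
    refine tensorPowerMap_intertwines_one_add_smul _ hfin.toFinset (hT ▸ hr) (hT ▸ hs) ?_ t
    intro u hu
    rw [lower]
    refine hA ⟨!![1, 0; u, 1], by simp [Matrix.det_fin_two]⟩ fun i j => ?_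
    have hu' : u ∈ F := by simpa using hu
    fin_cases i <;> fin_cases j <;> simp [hu']
end

section
/- For every integer n ≥ 0, the minimal polynomial over ℚ of the real number 2·cos(π/2^{n+1}) has degree 2^n, and its set of real roots is exactly {2·cos((2r+1)π/2^{n+1}) : r = 0, 1, …, 2^n − 1}; moreover these 2^n numbers are pairwise distinct. -/
open Real Polynomial

/-- The polynomial `Cₙ` with `Cₙ(2 cos θ) = 2 cos (2 ^ n θ)`. -/
noncomputable def cosDouble : ℕ → ℤ[X]
  | 0 => X
  | n + 1 => cosDouble n ^ 2 - C 2

lemma cosDouble_monic_natDegree (n : ℕ) :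
    (cosDouble n).Monic ∧ (cosDouble n).natDegree = 2 ^ n := by
  induction n with
  | zero => exact ⟨monic_X, natDegree_X⟩
  | succ n ih =>
    have hdeg : (cosDouble n ^ 2).natDegree = 2 ^ (n + 1) := by
      rw [ih.1.natDegree_pow, ih.2, pow_succ, mul_comm]
    refine ⟨(ih.1.pow 2).sub_of_left ?_, ?_⟩
    · refine degree_C_le.trans_lt ?_
      rw [← natDegree_pos_iff_degree_pos, hdeg]
      positivity
    · rw [cosDouble, natDegree_sub_C, hdeg]

lemma cosDouble_map_zmod_two (n : ℕ) :
    (cosDouble n).map (Int.castRingHom (ZMod 2)) = X ^ 2 ^ n := by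
  induction n with
  | zero => simp [cosDouble]
  | succ n ih =>
    have h : ((2 : ℤ) : ZMod 2) = 0 := by decide
    rw [cosDouble, Polynomial.map_sub, Polynomial.map_pow, ih, map_C, eq_intCast, h, C_0,
      sub_zero, ← pow_mul, pow_succ]

lemma cosDouble_coeff_zero (n : ℕ) :
    (cosDouble (n + 1)).coeff 0 = -2 ∨ (cosDouble (n + 1)).coeff 0 = 2 := by
  induction n with
  | zero => left; simp [cosDouble, coeff_zero_eq_eval_zero]
  | succ n ih =>
    right
    rw [coeff_zero_eq_eval_zero] at ih ⊢
    rw [cosDouble, eval_sub, eval_pow, eval_C]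
    rcases ih with h | h <;> rw [h] <;> norm_num

lemma cosDouble_irreducible (n : ℕ) : Irreducible (cosDouble n) := by
  cases n with
  | zero => exact irreducible_X
  | succ n =>
    obtain ⟨hmonic, hdeg⟩ := cosDouble_monic_natDegree (n + 1)
    have hdeg' : 0 < (cosDouble (n + 1)).natDegree := by rw [hdeg]; positivity
    have hprime : (Ideal.span {(2 : ℤ)}).IsPrime :=
      (Ideal.span_singleton_prime two_ne_zero).2 Int.prime_two
    refine irreducible_of_eisenstein_criterion hprime ?_ ?_
      (natDegree_pos_iff_degree_pos.1 hdeg') ?_ hmonic.isPrimitive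
    · rw [hmonic.leadingCoeff, Ideal.mem_span_singleton]
      norm_num
    · intro k hk
      rw [degree_eq_natDegree hmonic.ne_zero, hdeg, Nat.cast_lt] at hk
      have h := congrArg (fun p => p.coeff k) (cosDouble_map_zmod_two (n + 1))
      simp only [coeff_map, coeff_X_pow, hk.ne, if_false, eq_intCast] at h
      rw [Ideal.mem_span_singleton]
      exact (ZMod.intCast_zmod_eq_zero_iff_dvd _ 2).1 h
    · rw [Ideal.span_singleton_pow, Ideal.mem_span_singleton]
      rcases cosDouble_coeff_zero n with h | h <;> rw [h] <;> norm_num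

lemma aeval_cosDouble_two_mul_cos (n : ℕ) (θ : ℝ) :
    aeval (2 * cos θ) (cosDouble n) = 2 * cos (2 ^ n * θ) := by
  induction n with
  | zero => simp [cosDouble]
  | succ n ih =>
    have h : (2 : ℝ) ^ (n + 1) * θ = 2 * (2 ^ n * θ) := by ring
    rw [cosDouble, map_sub, map_pow, ih, h, cos_two_mul, aeval_C, eq_intCast]
    push_cast
    ring

lemma aeval_cosDouble_eq_zero (n r : ℕ) :
    aeval (2 * cos ((2 * (r : ℝ) + 1) * π / 2 ^ (n + 1))) (cosDouble n) = 0 := by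
  have h : (2 : ℝ) ^ n * ((2 * (r : ℝ) + 1) * π / 2 ^ (n + 1)) = (2 * (r : ℤ) + 1) * π / 2 := by
    push_cast
    field_simp
    ring
  rw [aeval_cosDouble_two_mul_cos, h, mul_eq_zero, cos_eq_zero_iff]
  exact Or.inr ⟨r, rfl⟩

lemma minpoly_two_mul_cos (n : ℕ) :
    minpoly ℚ (2 * cos (π / 2 ^ (n + 1))) = (cosDouble n).map (algebraMap ℤ ℚ) := by
  have hmonic := (cosDouble_monic_natDegree n).1
  refine (minpoly.eq_of_irreducible_of_monic ?_ ?_ (hmonic.map _)).symm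
  · exact (hmonic.irreducible_iff_irreducible_map_fraction_map).1 (cosDouble_irreducible n)
  · rw [aeval_map_algebraMap]
    simpa using aeval_cosDouble_eq_zero n 0

lemma two_mul_cos_odd_injective (n : ℕ) :
    Function.Injective
      (fun r : Fin (2 ^ n) => 2 * Real.cos ((2 * (r : ℕ) + 1) * π / 2 ^ (n + 1))) := by
  have hmem (r : Fin (2 ^ n)) :
      (2 * ((r : ℕ) : ℝ) + 1) * π / 2 ^ (n + 1) ∈ Set.Icc 0 π := by
    refine ⟨by positivity, ?_⟩
    have h : 2 * ((r : ℕ) : ℝ) + 1 ≤ 2 ^ (n + 1) := by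
      have := r.2
      rw [pow_succ]
      exact_mod_cast (by lia : 2 * (r : ℕ) + 1 ≤ 2 ^ n * 2)
    rw [div_le_iff₀ (by positivity), mul_comm π]
    gcongr
  intro r s hrs
  have h := injOn_cos (hmem r) (hmem s) (mul_left_cancel₀ two_ne_zero hrs)
  field_simp at h
  have h' : ((r : ℕ) : ℝ) = (s : ℕ) := by linarith
  exact Fin.ext (by exact_mod_cast h')

/-- the minimal polynomial of `2·cos(π/2^(n+1))` over `ℚ` has degree `2^n`,
its real roots are exactly the `2^n` numbers `2·cos((2r+1)π/2^(n+1))`, `0 ≤ r < 2^n`,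
and these numbers are pairwise distinct. -/
theorem stmt_14 (n : ℕ) :
    (minpoly ℚ (2 * Real.cos (π / 2 ^ (n + 1)))).natDegree = 2 ^ n ∧
    (∀ x : ℝ, (Polynomial.aeval x) (minpoly ℚ (2 * Real.cos (π / 2 ^ (n + 1)))) = 0 ↔
      ∃ r : ℕ, r < 2 ^ n ∧ x = 2 * Real.cos ((2 * (r : ℝ) + 1) * π / 2 ^ (n + 1))) ∧
    Function.Injective
      (fun r : Fin (2 ^ n) => 2 * Real.cos ((2 * (r : ℕ) + 1) * π / 2 ^ (n + 1))) := by
  obtain ⟨hmonic, hdeg⟩ := cosDouble_monic_natDegree n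
  have hinj := two_mul_cos_odd_injective n
  rw [minpoly_two_mul_cos]
  refine ⟨by rw [hmonic.natDegree_map, hdeg], fun x => ?_, hinj⟩
  rw [aeval_map_algebraMap]
  refine ⟨fun hx => ?_, ?_⟩
  · have hne : (cosDouble n).map (algebraMap ℤ ℝ) ≠ 0 := (hmonic.map _).ne_zero
    have hroots (y : ℝ) : y ∈ ((cosDouble n).map (algebraMap ℤ ℝ)).roots.toFinset ↔
        aeval y (cosDouble n) = 0 := by
      rw [Multiset.mem_toFinset, mem_roots hne, IsRoot.def, eval_map_algebraMap]
    have heq := Finset.eq_of_subset_of_card_le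
      (s := Finset.univ.image
        (fun r : Fin (2 ^ n) => 2 * Real.cos ((2 * (r : ℕ) + 1) * π / 2 ^ (n + 1))))
      (t := ((cosDouble n).map (algebraMap ℤ ℝ)).roots.toFinset)
      (fun y hy => by
        obtain ⟨r, -, rfl⟩ := Finset.mem_image.1 hy
        exact (hroots _).2 (aeval_cosDouble_eq_zero n r))
      (by
        rw [Finset.card_image_of_injective _ hinj, Finset.card_univ, Fintype.card_fin]
        refine (Multiset.toFinset_card_le _).trans ((card_roots' _).trans ?_)
        rw [hmonic.natDegree_map, hdeg])
    obtain ⟨r, -, hr⟩ := Finset.mem_image.1 (heq ▸ (hroots x).2 hx)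
    exact ⟨r, r.2, hr.symm⟩
  · rintro ⟨r, -, rfl⟩
    exact aeval_cosDouble_eq_zero n r
end
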